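/- Let B and B' be matrices over F whose rows and columns are indexed by the subsets of 𝒥 = {0,...,f-1}, each with all entries nonzero and each satisfying the cross-ratio condition. Suppose that for every subset J ⊆ 𝒥 one has B_{J,∅}·B'_{J^c,∅}·B'_{J,J^c} = B'_{J,∅}·B_{J^c,∅}·B_{J,J^c} (i.e. the quantities B_{J,∅}/(B_{J^c,∅}·B_{J,J^c}) agree for B and B'). Then there exists a function d from the subsets of 𝒥 to F^× such that B'_{J,J'} = d(J)·B_{J,J'}·d(J')^{-1} for all subsets J, J' ⊆ 𝒥; that is, B' is obtained from B by conjugation by an invertible diagonal matrix. -/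

import Mathlib

/-!
A matrix `B` satisfying the cross-ratio condition is determined by its diagonal and any column `o`
without zeros: `B i j = B i o * B j j / B j o`. Conjugating `B` by the diagonal matrix with entries
`B' i o / B i o` thus replaces column `o` by that of `B'` and keeps the diagonal, so it gives `B'`
as soon as the two diagonals agree. They do, since
`B J ∅ / (B Jᶜ ∅ * B J Jᶜ) = (B Jᶜ Jᶜ)⁻¹` by the cross-ratio condition.
-/

/-- The cross-ratio condition on a square matrix, i.e. the vanishing of its `2 × 2` minors. It is
written without subtraction so that the entries may lie in any type with a multiplication. -/
def CrossRatioCondition {ι M : Type*} [Mul M] (B : ι → ι → M) : Prop :=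
  ∀ i₁ i₂ j₁ j₂, B i₁ j₁ * B i₂ j₂ = B i₁ j₂ * B i₂ j₁

namespace CrossRatioCondition

variable {ι : Type*}

theorem apply_mul_apply_eq_mul_diag {M : Type*} [CommMagma M] {B : ι → ι → M}
    (hB : CrossRatioCondition B) (o j k : ι) : B k o * B j k = B j o * B k k :=
  (hB k j o k).trans (mul_comm _ _)

theorem diag_eq_diag {M₀ : Type*} [CommMonoidWithZero M₀] [IsCancelMulZero M₀]
    {B B' : ι → ι → M₀} (hB : CrossRatioCondition B) (hB' : CrossRatioCondition B') {o j k : ι}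
    (hjo : B j o ≠ 0) (hjo' : B' j o ≠ 0)
    (hagree : B j o * (B' k o * B' j k) = B' j o * (B k o * B j k)) : B' k k = B k k := by
  rw [hB.apply_mul_apply_eq_mul_diag, hB'.apply_mul_apply_eq_mul_diag,
    mul_left_comm (B' j o)] at hagree
  exact mul_left_cancel₀ hjo' (mul_left_cancel₀ hjo hagree)

variable {G₀ : Type*} [CommGroupWithZero G₀] {B B' : ι → ι → G₀} {o : ι}

theorem apply_eq_mul_diag_div (hB : CrossRatioCondition B) (i : ι) {j : ι} (hjo : B j o ≠ 0) :
    B i j = B i o * B j j / B j o :=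
  eq_div_of_mul_eq hjo (hB i j j o)

theorem exists_units_conj_of_diag_eq (hB : CrossRatioCondition B) (hB' : CrossRatioCondition B')
    (ho : ∀ i, B i o ≠ 0) (ho' : ∀ i, B' i o ≠ 0) (hdiag : ∀ i, B' i i = B i i) :
    ∃ d : ι → G₀ˣ, ∀ i j, B' i j = d i * B i j * ((d j)⁻¹ : G₀ˣ) := by
  refine ⟨fun i ↦ Units.mk0 (B' i o) (ho' i) / Units.mk0 (B i o) (ho i), fun i j ↦ ?_⟩
  have hio := ho i
  have hjo := ho j
  calc
    B' i j = B' i o * B j j / B' j o := by rw [hB'.apply_eq_mul_diag_div i (ho' j), hdiag]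
    _ = B' i o / B i o * (B i o * B j j / B j o) * (B' j o / B j o)⁻¹ := by field_simp
    _ = B' i o / B i o * B i j * (B' j o / B j o)⁻¹ := by rw [← hB.apply_eq_mul_diag_div i hjo]
    _ = _ := by simp only [Units.val_inv_eq_inv_val, Units.val_div_eq_div_val, Units.val_mk0]

end CrossRatioCondition

theorem statement14_general {ι G₀ : Type*} [CommGroupWithZero G₀] {B B' : ι → ι → G₀}
    (hB : CrossRatioCondition B) (hB' : CrossRatioCondition B') {o : ι}
    (ho : ∀ i, B i o ≠ 0) (ho' : ∀ i, B' i o ≠ 0) {c : ι → ι} (hc : c.Surjective)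
    (hagree : ∀ j, B j o * (B' (c j) o * B' j (c j)) = B' j o * (B (c j) o * B j (c j))) :
    ∃ d : ι → G₀ˣ, ∀ i j, B' i j = d i * B i j * ((d j)⁻¹ : G₀ˣ) :=
  hB.exists_units_conj_of_diag_eq hB' ho ho' <| hc.forall.2 fun j ↦
    hB.diag_eq_diag hB' (ho j) (ho' j) (hagree j)

/-- If two matrices `B, B'` indexed by subsets of `𝒥 = {0,...,f-1}`, with nonzero entries
and satisfying the cross-ratio condition, have the same quantities
`B_{J,∅}/(B_{J^c,∅}·B_{J,J^c})` for all `J`, then `B'` is obtained from `B` by conjugation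
by an invertible diagonal matrix. -/
theorem statement14 (f : ℕ) (hf : 1 ≤ f) (F : Type) [Field F]
    (B B' : Finset (Fin f) → Finset (Fin f) → F)
    (hB : ∀ J J', B J J' ≠ 0) (hB' : ∀ J J', B' J J' ≠ 0)
    (hcrossB : ∀ J₁ J₂ J₃ J₄, B J₁ J₃ * B J₂ J₄ = B J₁ J₄ * B J₂ J₃)
    (hcrossB' : ∀ J₁ J₂ J₃ J₄, B' J₁ J₃ * B' J₂ J₄ = B' J₁ J₄ * B' J₂ J₃)
    (hagree : ∀ J : Finset (Fin f),
      B J ∅ * (B' Jᶜ ∅ * B' J Jᶜ) = B' J ∅ * (B Jᶜ ∅ * B J Jᶜ)) :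
    ∃ d : Finset (Fin f) → Fˣ,
      ∀ J J', B' J J' = (d J : F) * B J J' * ((d J')⁻¹ : Fˣ) :=
  statement14_general hcrossB hcrossB' (hB · ∅) (hB' · ∅) compl_surjective hagree
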